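/- arXiv:1101.1488 — 2 statements merged into one kernel-verified Lean document; each statement's English description precedes it below -/
import Mathlib

section
/- There is an absolute constant C > 0 with the following property. Let P and Q be disjoint finite sets of points in the Euclidean plane ℝ² with |P| = |Q| = n, and let j ≥ 1 be an integer. Then the number of pairs (p, q) with p ∈ P and q ∈ Q such that the line through p and q has richness at least 2^(j−1) and at most 2^j with respect to P ∪ Q is at most C · (n²/2^j + n · 2^j). -/
open Set

noncomputable section

/-- The line through two points of the plane, as a set. -/
def lineThrough (p q : ℝ × ℝ) : Set (ℝ × ℝ) := (affineSpan ℝ {p, q} : AffineSubspace ℝ (ℝ × ℝ))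

/-- A subset of the plane is a line if it is the affine span of two distinct points. -/
def IsLine (L : Set (ℝ × ℝ)) : Prop := ∃ p q : ℝ × ℝ, p ≠ q ∧ L = lineThrough p q

/-- The richness of a line `L` with respect to a finite point set `S`:
the number of points of `S` incident on `L`. -/
def richness (S : Finset (ℝ × ℝ)) (L : Set (ℝ × ℝ)) : ℕ := ((S : Set (ℝ × ℝ)) ∩ L).ncard

/-- The lines induced by a finite point set `S`: lines passing through
at least two distinct points of `S`. -/
def InducedLines (S : Finset (ℝ × ℝ)) : Set (Set (ℝ × ℝ)) :=
  {L | IsLine L ∧ ∃ p ∈ S, ∃ q ∈ S, p ≠ q ∧ p ∈ L ∧ q ∈ L}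

/-- The bichromatic induced lines of a bichromatic point set `(P, Q)`:
lines incident on at least one point of `P` and at least one point of `Q`
(for disjoint `P`, `Q` such a line passes through two distinct points of `P ∪ Q`). -/
def BichromLines (P Q : Finset (ℝ × ℝ)) : Set (Set (ℝ × ℝ)) :=
  {L | IsLine L ∧ (∃ p ∈ P, p ∈ L) ∧ (∃ q ∈ Q, q ∈ L)}

/-!
A generic shear makes every line spanned by `P ∪ Q` non-vertical, so that lines become affine
functions and segments become graphs over intervals. The segments joining consecutive points on
the lines of a family `L`, each containing more than `k` points, form a geometric graph with at
least `k * |L|` edges. Two lines meet at most once, so there are at most `|L| ^ 2` crossings.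

A crossing-free geometric graph has at most `3 * |V|` edges. Indeed an edge that is not the steepest
one leaving its left endpoint is determined by the leftmost vertex `w` of the wedge between it and
the next steeper edge: it is the first edge below `w` or, when `w` is its right endpoint, it joins
`w` to the left endpoint of the first edge above `w`. Sampling vertices with probability
`6 * |V| / |E|` turns this into the crossing lemma `|E| ^ 3 ≤ 72 * |V| ^ 2 * |crossings|`, and so
`|L| * k ^ 3 ≤ 72 * |V| ^ 2 + 6 * |V| * k ^ 2`, the Szemerédi-Trotter bound. A line with at most `m`
points accounts for at most `m ^ 2` pairs, and in the dyadic range `k` and `m` are comparable.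
-/

open scoped Finset

section Preliminaries

theorem affineMap_eq_of_apply_eq {k V P : Type*} [Field k] [AddCommGroup V] [Module k V]
    [AddTorsor V P] {l m : k →ᵃ[k] P} {x z : k} (hxz : x ≠ z) (hx : l x = m x)
    (hz : l z = m z) : l = m := by
  ext t
  have ht : t = AffineMap.lineMap x z ((t - x) / (z - x)) := by
    rw [AffineMap.lineMap_apply_module', smul_eq_mul, div_mul_cancel₀ _ (sub_ne_zero.2 hxz.symm),
      sub_add_cancel]
  rw [ht, AffineMap.apply_lineMap, AffineMap.apply_lineMap, hx, hz]

theorem le_of_lt_of_forall_mem_Ioo_ne {f g : ℝ → ℝ} {z x : ℝ} (hzx : z ≤ x)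
    (hf : ContinuousOn f (Icc z x)) (hg : ContinuousOn g (Icc z x))
    (hne : ∀ t ∈ Ioo z x, f t ≠ g t) (hx : f x < g x) : f z ≤ g z := by
  by_contra! hz
  obtain ⟨t, ht, hft⟩ := intermediate_value_Ioo' hzx (hf.sub hg)
    (show (0 : ℝ) ∈ Ioo (f x - g x) (f z - g z) from ⟨sub_neg.2 hx, sub_pos.2 hz⟩)
  exact hne t ht (sub_eq_zero.1 hft)

theorem card_le_card_consecutive_add_one {α : Type*} [LinearOrder α] (s : Finset α) :
    #s ≤ #{e ∈ s ×ˢ s | e.1 < e.2 ∧ ∀ c ∈ s, ¬(e.1 < c ∧ c < e.2)} + 1 := by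
  rcases s.eq_empty_or_nonempty with rfl | hs
  · simp
  rw [← Nat.sub_le_iff_le_add, ← Finset.card_erase_of_mem (s.max'_mem hs)]
  refine le_trans (Finset.card_le_card fun a ha ↦ ?_) (Finset.card_image_le (f := Prod.fst))
  have has : a ∈ s := Finset.mem_of_mem_erase ha
  obtain ⟨b, hb, hab, hmin⟩ :=
    Finset.exists_next_right ⟨_, s.max'_mem hs, Finset.lt_max'_of_mem_erase_max' s hs ha⟩
  have hempty : ∀ c ∈ s, ¬(a < c ∧ c < b) := fun c hc ⟨hac, hcb⟩ ↦ (hmin c hc hac).not_gt hcb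
  exact Finset.mem_image.2
    ⟨(a, b), Finset.mem_filter.2 ⟨Finset.mk_mem_product has hb, hab, hempty⟩, rfl⟩

end Preliminaries

section RandomSample

variable {α R : Type*} [DecidableEq α] [CommRing R]

/-- The probability that a random subset of `V`, containing each element independently with
probability `p`, equals `S`. -/
def sampleWeight (p : R) (V S : Finset α) : R := p ^ #S * (1 - p) ^ #(V \ S)

theorem sampleWeight_nonneg {p : ℝ} (hp₀ : 0 ≤ p) (hp₁ : p ≤ 1) (V S : Finset α) :
    0 ≤ sampleWeight p V S :=
  mul_nonneg (pow_nonneg hp₀ _) (pow_nonneg (sub_nonneg.2 hp₁) _)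

theorem sum_sampleWeight_of_subset (p : R) {V T : Finset α} (hT : T ⊆ V) :
    ∑ S ∈ V.powerset with T ⊆ S, sampleWeight p V S = p ^ #T := by
  -- Expand `∏ v ∈ V, (p + (1 - p))` after replacing `1 - p` by `0` on `T`: only the sets
  -- containing `T` survive.
  have hexp := Finset.prod_add (fun _ ↦ p) (fun v ↦ if v ∈ T then 0 else 1 - p) V
  have hlhs : ∏ v ∈ V, (p + if v ∈ T then 0 else 1 - p) = p ^ #T := by
    calc ∏ v ∈ V, (p + if v ∈ T then 0 else 1 - p) = ∏ v ∈ V, if v ∈ T then p else 1 :=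
          Finset.prod_congr rfl fun v _ ↦ by split_ifs <;> ring
      _ = p ^ #T := by
          rw [Finset.prod_ite_mem, Finset.inter_eq_right.2 hT, Finset.prod_const]
  rw [← hlhs, hexp, Finset.sum_filter]
  refine Finset.sum_congr rfl fun S _ ↦ ?_
  rw [sampleWeight, Finset.prod_const]
  split_ifs with hTS
  · rw [Finset.prod_congr rfl fun v hv ↦ if_neg fun hvT ↦ (Finset.mem_sdiff.1 hv).2 (hTS hvT),
      Finset.prod_const]
  · obtain ⟨v, hvT, hvS⟩ := Finset.not_subset.1 hTS
    have hzero : ∏ v ∈ V \ S, (if v ∈ T then 0 else 1 - p) = 0 :=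
      Finset.prod_eq_zero (Finset.mem_sdiff.2 ⟨hT hvT, hvS⟩) (if_pos hvT)
    rw [hzero, mul_zero]

theorem sum_sampleWeight_mul_card {ι : Type*} (p : R) {V : Finset α} {A : Finset ι}
    {T : ι → Finset α} {k : ℕ} (hT : ∀ a ∈ A, T a ⊆ V) (hk : ∀ a ∈ A, #(T a) = k) :
    ∑ S ∈ V.powerset, sampleWeight p V S * #{a ∈ A | T a ⊆ S} = p ^ k * #A := by
  calc ∑ S ∈ V.powerset, sampleWeight p V S * #{a ∈ A | T a ⊆ S}
      = ∑ a ∈ A, ∑ S ∈ V.powerset with T a ⊆ S, sampleWeight p V S := by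
        simp only [Finset.card_filter, Nat.cast_sum, Nat.cast_ite, Nat.cast_one, Nat.cast_zero,
          Finset.mul_sum, mul_ite, mul_one, mul_zero, Finset.sum_filter]
        exact Finset.sum_comm
    _ = ∑ _a ∈ A, p ^ k :=
        Finset.sum_congr rfl fun a ha ↦ by rw [sum_sampleWeight_of_subset p (hT a ha), hk a ha]
    _ = p ^ k * #A := by rw [Finset.sum_const, nsmul_eq_mul, mul_comm]

end RandomSample

section Chord

/-- The non-vertical line through `(e.1, y e.1)` and `(e.2, y e.2)`, as an affine function of the
abscissa. A point of the graph of `y` is encoded by its abscissa alone, and a segment joining two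
such points by the pair `e` of its abscissas. -/
def chord (y : ℝ → ℝ) (e : ℝ × ℝ) : ℝ →ᵃ[ℝ] ℝ :=
  slope y e.1 e.2 • (AffineMap.id ℝ ℝ - AffineMap.const ℝ ℝ e.1) + AffineMap.const ℝ ℝ (y e.1)

variable {y : ℝ → ℝ} {e f : ℝ × ℝ}

theorem chord_apply (y : ℝ → ℝ) (e : ℝ × ℝ) (x : ℝ) :
    chord y e x = slope y e.1 e.2 * (x - e.1) + y e.1 := rfl

@[simp]
theorem chord_fst (y : ℝ → ℝ) (e : ℝ × ℝ) : chord y e e.1 = y e.1 := by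
  simp [chord_apply]

@[simp]
theorem chord_snd (y : ℝ → ℝ) (e : ℝ × ℝ) : chord y e e.2 = y e.2 := by
  rw [chord_apply, mul_comm]
  exact sub_smul_slope_vadd y e.1 e.2

theorem chord_continuous (y : ℝ → ℝ) (e : ℝ × ℝ) : Continuous (chord y e) :=
  (chord y e).continuous_of_finiteDimensional

theorem chord_lt_chord_iff_slope_lt (hfe : f.1 = e.1) {x : ℝ} (hx : e.1 < x) :
    chord y e x < chord y f x ↔ slope y e.1 e.2 < slope y f.1 f.2 := by
  rw [chord_apply, chord_apply, hfe, add_lt_add_iff_right, mul_lt_mul_iff_left₀ (sub_pos.2 hx)]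

theorem chord_eq_of_apply_eq {l : ℝ →ᵃ[ℝ] ℝ} (he : e.1 ≠ e.2) (h₁ : l e.1 = y e.1)
    (h₂ : l e.2 = y e.2) : chord y e = l :=
  affineMap_eq_of_apply_eq he ((chord_fst y e).trans h₁.symm) ((chord_snd y e).trans h₂.symm)

end Chord

/-- The segments encoded by `E` form a geometric graph on the points `(v, y v)`, `v ∈ V`: they join
points of `V`, listed from left to right, and contain no point of `V` in their interior. -/
structure IsGeometricGraph (V : Finset ℝ) (y : ℝ → ℝ) (E : Finset (ℝ × ℝ)) : Prop where
  fst_mem : ∀ e ∈ E, e.1 ∈ V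
  snd_mem : ∀ e ∈ E, e.2 ∈ V
  fst_lt_snd : ∀ e ∈ E, e.1 < e.2
  chord_ne : ∀ e ∈ E, ∀ v ∈ V, v ∈ Ioo e.1 e.2 → chord y e v ≠ y v

/-- The segments `e` and `f` lie on different lines and meet in a point interior to both. -/
def Crosses (y : ℝ → ℝ) (e f : ℝ × ℝ) : Prop :=
  chord y e ≠ chord y f ∧ ∃ x ∈ Ioo e.1 e.2 ∩ Ioo f.1 f.2, chord y e x = chord y f x

open scoped Classical in
/-- The crossing pairs of segments of `E`. The pairs are ordered, so each crossing counts twice. -/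
def crossings (y : ℝ → ℝ) (E : Finset (ℝ × ℝ)) : Finset ((ℝ × ℝ) × (ℝ × ℝ)) :=
  {ef ∈ E ×ˢ E | Crosses y ef.1 ef.2}

/-- No two segments of `E` cross. -/
def CrossingFree (y : ℝ → ℝ) (E : Finset (ℝ × ℝ)) : Prop :=
  ∀ e ∈ E, ∀ f ∈ E, ¬Crosses y e f

theorem mem_crossings {y : ℝ → ℝ} {E : Finset (ℝ × ℝ)} {ef : (ℝ × ℝ) × (ℝ × ℝ)} :
    ef ∈ crossings y E ↔ (ef.1 ∈ E ∧ ef.2 ∈ E) ∧ Crosses y ef.1 ef.2 := by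
  classical exact Finset.mem_filter.trans (and_congr_left' Finset.mem_product)

namespace IsGeometricGraph

variable {V : Finset ℝ} {y : ℝ → ℝ} {E : Finset (ℝ × ℝ)} {e f : ℝ × ℝ} {x : ℝ}

theorem mono {V' : Finset ℝ} {E' : Finset (ℝ × ℝ)} (hG : IsGeometricGraph V y E) (hV : V' ⊆ V)
    (hE : E' ⊆ E) (hE' : ∀ e ∈ E', e.1 ∈ V' ∧ e.2 ∈ V') : IsGeometricGraph V' y E' where
  fst_mem e he := (hE' e he).1
  snd_mem e he := (hE' e he).2
  fst_lt_snd e he := hG.fst_lt_snd e (hE he)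
  chord_ne e he v hv := hG.chord_ne e (hE he) v (hV hv)

theorem fst_le_of_chord_eq (hG : IsGeometricGraph V y E) (he : e ∈ E) (hf : f ∈ E)
    (hef : chord y e = chord y f) (hlt : f.1 < e.2) : f.1 ≤ e.1 := by
  by_contra! h
  exact hG.chord_ne e he f.1 (hG.fst_mem f hf) ⟨h, hlt⟩ (by rw [hef, chord_fst])

theorem le_snd_of_chord_eq (hG : IsGeometricGraph V y E) (he : e ∈ E) (hf : f ∈ E)
    (hef : chord y e = chord y f) (hlt : e.1 < f.2) : e.2 ≤ f.2 := by
  by_contra! h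
  exact hG.chord_ne e he f.2 (hG.snd_mem f hf) ⟨hlt, h⟩ (by rw [hef, chord_snd])

theorem eq_of_chord_eq (hG : IsGeometricGraph V y E) (he : e ∈ E) (hf : f ∈ E)
    (hef : chord y e = chord y f) (hx : x ∈ Ioo e.1 e.2 ∩ Ioo f.1 f.2) : e = f := by
  obtain ⟨⟨hex, hxe⟩, hfx, hxf⟩ := hx
  exact Prod.ext
    ((hG.fst_le_of_chord_eq hf he hef.symm (hex.trans hxf)).antisymm
      (hG.fst_le_of_chord_eq he hf hef (hfx.trans hxe)))
    ((hG.le_snd_of_chord_eq he hf hef (hex.trans hxf)).antisymm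
      (hG.le_snd_of_chord_eq hf he hef.symm (hfx.trans hxe)))

theorem eq_of_chord_apply_eq (hG : IsGeometricGraph V y E) (hE : CrossingFree y E) (he : e ∈ E)
    (hf : f ∈ E) (hx : x ∈ Ioo e.1 e.2 ∩ Ioo f.1 f.2) (hef : chord y e x = chord y f x) :
    e = f := by
  by_contra hne
  exact hE e he f hf ⟨fun h ↦ hne (hG.eq_of_chord_eq he hf h hx), x, hx, hef⟩

end IsGeometricGraph

section CrossingFree

variable {V : Finset ℝ} {y : ℝ → ℝ} {E : Finset (ℝ × ℝ)} {e f g : ℝ × ℝ} {w x z : ℝ}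

theorem CrossingFree.chord_le_of_chord_lt (hE : CrossingFree y E) (he : e ∈ E) (hf : f ∈ E)
    (hez : e.1 ≤ z) (hfz : f.1 ≤ z) (hzx : z ≤ x) (hxe : x ≤ e.2) (hxf : x ≤ f.2)
    (hx : chord y e x < chord y f x) : chord y e z ≤ chord y f z := by
  refine le_of_lt_of_forall_mem_Ioo_ne hzx (chord_continuous y e).continuousOn
    (chord_continuous y f).continuousOn (fun t ht heq ↦ hE e he f hf ⟨?_, t, ⟨?_, ?_⟩, heq⟩) hx
  · exact fun h ↦ hx.ne (by rw [h])
  · exact ⟨hez.trans_lt ht.1, ht.2.trans_le hxe⟩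
  · exact ⟨hfz.trans_lt ht.1, ht.2.trans_le hxf⟩

/-- The segment `e` has the largest slope among the segments of `E` with its left endpoint. -/
def IsSteepest (y : ℝ → ℝ) (E : Finset (ℝ × ℝ)) (e : ℝ × ℝ) : Prop :=
  ∀ f ∈ E, f.1 = e.1 → slope y f.1 f.2 ≤ slope y e.1 e.2

/-- Going down vertically from the point `(w, y w)`, the first segment of `E` met is `e`. -/
def IsNextBelow (y : ℝ → ℝ) (E : Finset (ℝ × ℝ)) (w : ℝ) (e : ℝ × ℝ) : Prop :=
  w ∈ Ioo e.1 e.2 ∧ chord y e w < y w ∧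
    ∀ f ∈ E, w ∈ Ioo f.1 f.2 → chord y f w < y w → chord y f w ≤ chord y e w

/-- Going up vertically from the point `(w, y w)`, the first segment of `E` met is `e`. -/
def IsNextAbove (y : ℝ → ℝ) (E : Finset (ℝ × ℝ)) (w : ℝ) (e : ℝ × ℝ) : Prop :=
  w ∈ Ioo e.1 e.2 ∧ y w < chord y e w ∧
    ∀ f ∈ E, w ∈ Ioo f.1 f.2 → y w < chord y f w → chord y e w ≤ chord y f w

theorem IsSteepest.eq (hG : IsGeometricGraph V y E) (he : e ∈ E) (hf : f ∈ E) (hef : e.1 = f.1)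
    (hse : IsSteepest y E e) (hsf : IsSteepest y E f) : e = f := by
  obtain ⟨x, hx, hx'⟩ := exists_between
    (lt_min (hG.fst_lt_snd e he) (hef.trans_lt (hG.fst_lt_snd f hf)))
  obtain ⟨hxe, hxf⟩ := lt_min_iff.1 hx'
  have hslope : slope y e.1 e.2 = slope y f.1 f.2 := (hsf e he hef).antisymm (hse f hf hef.symm)
  exact hG.eq_of_chord_eq he hf (by rw [chord, chord, hslope, hef]) ⟨⟨hx, hxe⟩, hef ▸ hx, hxf⟩

theorem IsNextBelow.eq (hG : IsGeometricGraph V y E) (hE : CrossingFree y E) (he : e ∈ E)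
    (hf : f ∈ E) (hwe : IsNextBelow y E w e) (hwf : IsNextBelow y E w f) : e = f :=
  hG.eq_of_chord_apply_eq hE he hf ⟨hwe.1, hwf.1⟩
    ((hwf.2.2 e he hwe.1 hwe.2.1).antisymm (hwe.2.2 f hf hwf.1 hwf.2.1))

theorem IsNextAbove.eq (hG : IsGeometricGraph V y E) (hE : CrossingFree y E) (he : e ∈ E)
    (hf : f ∈ E) (hwe : IsNextAbove y E w e) (hwf : IsNextAbove y E w f) : e = f :=
  hG.eq_of_chord_apply_eq hE he hf ⟨hwe.1, hwf.1⟩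
    ((hwe.2.2 f hf hwf.1 hwf.2.1).antisymm (hwf.2.2 e he hwe.1 hwe.2.1))

/-- The vertices in the closed region swept by `e` and `f` to the right of their common left
endpoint, where `f` is the upper of the two segments. -/
def wedge (V : Finset ℝ) (y : ℝ → ℝ) (e f : ℝ × ℝ) : Finset ℝ :=
  {v ∈ V | (e.1 < v ∧ v ≤ e.2 ∧ v ≤ f.2) ∧ chord y e v ≤ y v ∧ y v ≤ chord y f v}

theorem mem_wedge : w ∈ wedge V y e f ↔
    w ∈ V ∧ (e.1 < w ∧ w ≤ e.2 ∧ w ≤ f.2) ∧ chord y e w ≤ y w ∧ y w ≤ chord y f w :=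
  Finset.mem_filter

theorem wedge_nonempty (hG : IsGeometricGraph V y E) (he : e ∈ E) (hf : f ∈ E) (hfe : f.1 = e.1)
    (hslope : slope y e.1 e.2 < slope y f.1 f.2) : (wedge V y e f).Nonempty := by
  have hlt : ∀ x, e.1 < x → chord y e x < chord y f x := fun x hx ↦
    (chord_lt_chord_iff_slope_lt hfe hx).2 hslope
  have hee := hG.fst_lt_snd e he
  have hef : e.1 < f.2 := hfe ▸ hG.fst_lt_snd f hf
  rcases le_total e.2 f.2 with h | h
  · refine ⟨e.2, mem_wedge.2 ⟨hG.snd_mem e he, ⟨hee, le_rfl, h⟩, (chord_snd y e).le, ?_⟩⟩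
    exact (chord_snd y e).symm.trans_le (hlt _ hee).le
  · refine ⟨f.2, mem_wedge.2 ⟨hG.snd_mem f hf, ⟨hef, h, le_rfl⟩, ?_, (chord_snd y f).ge⟩⟩
    exact (hlt _ hef).le.trans_eq (chord_snd y f)

/- Followed to the left from above `w`, such a `g` stays between `e` and `f`, so it would start in
the wedge to the left of `w`, or at the apex, or pass through the apex. -/
theorem not_chord_between_of_isLeast_wedge (hG : IsGeometricGraph V y E) (hE : CrossingFree y E)
    (he : e ∈ E) (hf : f ∈ E) (hfe : f.1 = e.1)
    (hmin : ∀ g ∈ E, g.1 = e.1 → slope y e.1 e.2 < slope y g.1 g.2 →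
      slope y f.1 f.2 ≤ slope y g.1 g.2)
    (hw : IsLeast (wedge V y e f : Set ℝ) w) (hg : g ∈ E) (hwg : w ∈ Ioo g.1 g.2) :
    ¬(chord y e w < chord y g w ∧ chord y g w < chord y f w) := by
  rintro ⟨heg, hgf⟩
  obtain ⟨-, ⟨hew, hwe, hwf⟩, -⟩ := mem_wedge.1 hw.1
  have hbetween : ∀ z, e.1 ≤ z → g.1 ≤ z → z ≤ w →
      chord y e z ≤ chord y g z ∧ chord y g z ≤ chord y f z := fun z hez hgz hzw ↦
    ⟨hE.chord_le_of_chord_lt he hg hez hgz hzw hwe hwg.2.le heg,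
      hE.chord_le_of_chord_lt hg hf hgz (hfe.trans_le hez) hzw hwg.2.le hwf hgf⟩
  rcases lt_trichotomy g.1 e.1 with hlt | heq | hgt
  · obtain ⟨hle, hge⟩ := hbetween e.1 le_rfl hlt.le hew.le
    rw [chord_fst] at hle
    rw [← hfe, chord_fst, hfe] at hge
    exact hG.chord_ne g hg e.1 (hG.fst_mem e he) ⟨hlt, hew.trans hwg.2⟩ (hge.antisymm hle)
  · have hslope_eg := (chord_lt_chord_iff_slope_lt heq hew).1 heg
    have hslope_gf :=
      (chord_lt_chord_iff_slope_lt (hfe.trans heq.symm) (heq.trans_lt hew)).1 hgf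
    exact (hmin g hg heq hslope_eg).not_gt hslope_gf
  · obtain ⟨hle, hge⟩ := hbetween g.1 hgt.le le_rfl hwg.1.le
    rw [chord_fst] at hle hge
    have hmem : g.1 ∈ wedge V y e f := mem_wedge.2
      ⟨hG.fst_mem g hg, ⟨hgt, hwg.1.le.trans hwe, hwg.1.le.trans hwf⟩, hle, hge⟩
    exact (hw.2 hmem).not_gt hwg.1

theorem isSteepest_or_isNextBelow_or_isNextAbove (hG : IsGeometricGraph V y E)
    (hE : CrossingFree y E) (he : e ∈ E) :
    IsSteepest y E e ∨ (∃ w ∈ V, IsNextBelow y E w e) ∨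
      ∃ f ∈ E, f.1 = e.1 ∧ IsNextAbove y E e.2 f := by
  refine or_iff_not_imp_left.2 fun hsteep ↦ ?_
  obtain ⟨f₀, hf₀, hf₀e, hf₀slope⟩ : ∃ f ∈ E, f.1 = e.1 ∧ slope y e.1 e.2 < slope y f.1 f.2 := by
    simpa [IsSteepest] using hsteep
  obtain ⟨f, hf, hmin⟩ := Finset.exists_min_image
    {f ∈ E | f.1 = e.1 ∧ slope y e.1 e.2 < slope y f.1 f.2} (fun f ↦ slope y f.1 f.2)
    ⟨f₀, Finset.mem_filter.2 ⟨hf₀, hf₀e, hf₀slope⟩⟩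
  obtain ⟨hfE, hfe, hslope⟩ := Finset.mem_filter.1 hf
  have hne := wedge_nonempty hG he hfE hfe hslope
  set w := (wedge V y e f).min' hne
  have hw : IsLeast (wedge V y e f : Set ℝ) w := (wedge V y e f).isLeast_min' hne
  have hno : ∀ g ∈ E, w ∈ Ioo g.1 g.2 → ¬(chord y e w < chord y g w ∧ chord y g w < chord y f w) :=
    fun g hg ↦ not_chord_between_of_isLeast_wedge hG hE he hfE hfe
      (fun g hg hge hlt ↦ hmin g (Finset.mem_filter.2 ⟨hg, hge, hlt⟩)) hw hg
  obtain ⟨hwV, ⟨hew, hwe, hwf⟩, hle, hge⟩ := mem_wedge.1 hw.1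
  rcases hwe.lt_or_eq with hlt | heq
  · have hbelow : chord y e w < y w := hle.lt_of_ne (hG.chord_ne e he w hwV ⟨hew, hlt⟩)
    refine .inl ⟨w, hwV, ⟨hew, hlt⟩, hbelow, fun g hg hwg hgw ↦ ?_⟩
    by_contra! h
    exact hno g hg hwg ⟨h, hgw.trans_le hge⟩
  · have habove : chord y e w < chord y f w := (chord_lt_chord_iff_slope_lt hfe hew).2 hslope
    have hw_ne : w ≠ f.2 := fun h ↦
      hslope.ne (by rw [show e = f from Prod.ext hfe.symm (heq.symm.trans h)])
    have hyw : chord y e w = y w := by rw [heq, chord_snd]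
    rw [← heq]
    refine .inr ⟨f, hfE, hfe, ⟨hfe.trans_lt hew, hwf.lt_of_ne hw_ne⟩, hyw ▸ habove,
      fun g hg hwg hgw ↦ ?_⟩
    by_contra! h
    exact hno g hg hwg ⟨hyw ▸ hgw, h⟩

theorem IsGeometricGraph.card_le_of_crossingFree (hG : IsGeometricGraph V y E)
    (hE : CrossingFree y E) : #E ≤ 3 * #V := by
  classical
  have hcover : E ⊆ {e ∈ E | IsSteepest y E e} ∪ {e ∈ E | ∃ w ∈ V, IsNextBelow y E w e} ∪
      {e ∈ E | ∃ f ∈ E, f.1 = e.1 ∧ IsNextAbove y E e.2 f} := fun e he ↦ by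
    simpa [he, or_assoc] using isSteepest_or_isNextBelow_or_isNextAbove hG hE he
  have hsteepest : #{e ∈ E | IsSteepest y E e} ≤ #V := by
    refine Finset.card_le_card_of_injOn Prod.fst
      (fun e he ↦ hG.fst_mem e (Finset.mem_filter.1 he).1) fun e he f hf hef ↦ ?_
    obtain ⟨heE, hse⟩ := Finset.mem_filter.1 he
    obtain ⟨hfE, hsf⟩ := Finset.mem_filter.1 hf
    exact hse.eq hG heE hfE hef hsf
  have hbelow : #{e ∈ E | ∃ w ∈ V, IsNextBelow y E w e} ≤ #V := by
    refine Finset.card_le_card_of_forall_subsingleton (fun e w ↦ IsNextBelow y E w e)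
      (fun e he ↦ (Finset.mem_filter.1 he).2) fun w _ e ⟨he, hwe⟩ f ⟨hf, hwf⟩ ↦ ?_
    exact hwe.eq hG hE (Finset.mem_filter.1 he).1 (Finset.mem_filter.1 hf).1 hwf
  have habove : #{e ∈ E | ∃ f ∈ E, f.1 = e.1 ∧ IsNextAbove y E e.2 f} ≤ #V := by
    refine Finset.card_le_card_of_injOn Prod.snd
      (fun e he ↦ hG.snd_mem e (Finset.mem_filter.1 he).1) fun e he f hf hef ↦ ?_
    obtain ⟨-, e', he', hee', habove_e⟩ := Finset.mem_filter.1 he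
    obtain ⟨-, f', hf', hff', habove_f⟩ := Finset.mem_filter.1 hf
    obtain rfl : e' = f' := habove_e.eq hG hE he' hf' (hef ▸ habove_f)
    exact Prod.ext (hee'.symm.trans hff') hef
  have hcard := (Finset.card_le_card hcover).trans (Finset.card_union_le _ _)
  have hunion := Finset.card_union_le {e ∈ E | IsSteepest y E e}
    {e ∈ E | ∃ w ∈ V, IsNextBelow y E w e}
  lia

end CrossingFree

section CrossingLemma

/-- The two abscissas of the segment `e` as a finite set. -/
def endpoints (e : ℝ × ℝ) : Finset ℝ := {e.1, e.2}

variable {V : Finset ℝ} {y : ℝ → ℝ} {E : Finset (ℝ × ℝ)} {e f : ℝ × ℝ}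

theorem endpoints_subset_iff {S : Finset ℝ} : endpoints e ⊆ S ↔ e.1 ∈ S ∧ e.2 ∈ S := by
  rw [endpoints, Finset.insert_subset_iff, Finset.singleton_subset_iff]

theorem chord_apply_of_mem_endpoints {v : ℝ} (hv : v ∈ endpoints e) : chord y e v = y v := by
  rcases Finset.mem_insert.1 hv with rfl | hv
  · exact chord_fst y e
  · rw [Finset.mem_singleton.1 hv, chord_snd]

theorem Crosses.disjoint_endpoints (h : Crosses y e f) : Disjoint (endpoints e) (endpoints f) := by
  obtain ⟨hne, x, ⟨hxe, -⟩, hx⟩ := h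
  refine Finset.disjoint_left.2 fun v hve hvf ↦ hne (affineMap_eq_of_apply_eq (x := v) ?_ ?_ hx)
  · rintro rfl
    simpa [hxe.1.ne', hxe.2.ne] using Finset.mem_insert.1 hve
  · rw [chord_apply_of_mem_endpoints hve, chord_apply_of_mem_endpoints hvf]

namespace IsGeometricGraph

theorem card_endpoints (hG : IsGeometricGraph V y E) (he : e ∈ E) : #(endpoints e) = 2 :=
  Finset.card_pair (hG.fst_lt_snd e he).ne

theorem endpoints_subset (hG : IsGeometricGraph V y E) (he : e ∈ E) : endpoints e ⊆ V :=
  endpoints_subset_iff.2 ⟨hG.fst_mem e he, hG.snd_mem e he⟩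

theorem card_le_add_card_crossings (hG : IsGeometricGraph V y E) :
    #E ≤ 3 * #V + #(crossings y E) := by
  set F := E \ (crossings y E).image Prod.fst
  have hFE : F ⊆ E := Finset.sdiff_subset
  have hfree : CrossingFree y F := fun e he f hf hef ↦ (Finset.mem_sdiff.1 he).2
    (Finset.mem_image.2 ⟨(e, f), mem_crossings.2 ⟨⟨hFE he, hFE hf⟩, hef⟩, rfl⟩)
  have hFG : IsGeometricGraph V y F :=
    hG.mono subset_rfl hFE fun e he ↦ ⟨hG.fst_mem e (hFE he), hG.snd_mem e (hFE he)⟩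
  calc #E ≤ #F + #((crossings y E).image Prod.fst) := Finset.card_le_card_sdiff_add_card
    _ ≤ 3 * #V + #(crossings y E) :=
        add_le_add (hFG.card_le_of_crossingFree hfree) Finset.card_image_le

theorem card_induced_le (hG : IsGeometricGraph V y E) {S : Finset ℝ} (hS : S ⊆ V) :
    #{e ∈ E | endpoints e ⊆ S} ≤ 3 * #{v ∈ V | {v} ⊆ S} +
      #{ef ∈ crossings y E | endpoints ef.1 ∪ endpoints ef.2 ⊆ S} := by
  have hVS : ({v ∈ V | {v} ⊆ S} : Finset ℝ) = S := by
    simp only [Finset.singleton_subset_iff, Finset.filter_mem_eq_inter, Finset.inter_eq_right.2 hS]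
  have hcross : crossings y {e ∈ E | endpoints e ⊆ S} ⊆
      {ef ∈ crossings y E | endpoints ef.1 ∪ endpoints ef.2 ⊆ S} := fun ef hef ↦ by
    obtain ⟨⟨he, hf⟩, h⟩ := mem_crossings.1 hef
    rw [Finset.mem_filter] at he hf
    exact Finset.mem_filter.2
      ⟨mem_crossings.2 ⟨⟨he.1, hf.1⟩, h⟩, Finset.union_subset he.2 hf.2⟩
  have hGS : IsGeometricGraph S y {e ∈ E | endpoints e ⊆ S} := hG.mono hS (Finset.filter_subset _ _)
    fun e he ↦ endpoints_subset_iff.1 (Finset.mem_filter.1 he).2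
  rw [hVS]
  exact hGS.card_le_add_card_crossings.trans (by gcongr)

theorem sq_mul_card_le (hG : IsGeometricGraph V y E) {p : ℝ} (hp₀ : 0 ≤ p) (hp₁ : p ≤ 1) :
    p ^ 2 * #E ≤ 3 * (p * #V) + p ^ 4 * #(crossings y E) := by
  have hE := sum_sampleWeight_mul_card p (V := V) (A := E) (T := endpoints) (k := 2)
    (fun e he ↦ hG.endpoints_subset he) (fun e he ↦ hG.card_endpoints he)
  have hV := sum_sampleWeight_mul_card p (V := V) (A := V) (T := singleton) (k := 1)
    (fun v hv ↦ Finset.singleton_subset_iff.2 hv) (fun v _ ↦ Finset.card_singleton v)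
  have hX := sum_sampleWeight_mul_card p (V := V) (A := crossings y E)
    (T := fun ef ↦ endpoints ef.1 ∪ endpoints ef.2) (k := 4)
    (fun ef hef ↦ Finset.union_subset (hG.endpoints_subset (mem_crossings.1 hef).1.1)
      (hG.endpoints_subset (mem_crossings.1 hef).1.2))
    (fun ef hef ↦ by
      obtain ⟨⟨he, hf⟩, hcross⟩ := mem_crossings.1 hef
      rw [Finset.card_union_of_disjoint hcross.disjoint_endpoints, hG.card_endpoints he,
        hG.card_endpoints hf])
  rw [pow_one] at hV
  rw [← hE, ← hV, ← hX, Finset.mul_sum, ← Finset.sum_add_distrib]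
  refine Finset.sum_le_sum fun S hS ↦ ?_
  have hS' : (#{e ∈ E | endpoints e ⊆ S} : ℝ) ≤ 3 * #{v ∈ V | {v} ⊆ S} +
      #{ef ∈ crossings y E | endpoints ef.1 ∪ endpoints ef.2 ⊆ S} := by
    exact_mod_cast hG.card_induced_le (Finset.mem_powerset.1 hS)
  linarith [mul_le_mul_of_nonneg_left hS' (sampleWeight_nonneg hp₀ hp₁ V S)]

theorem card_pow_three_le (hG : IsGeometricGraph V y E) (h : 6 * #V ≤ #E) :
    #E ^ 3 ≤ 72 * #V ^ 2 * #(crossings y E) := by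
  rcases E.eq_empty_or_nonempty with rfl | hne
  · simp
  obtain ⟨e, he⟩ := hne
  have hE : (0 : ℝ) < #E := Nat.cast_pos.2 (Finset.card_pos.2 ⟨e, he⟩)
  have hV : (0 : ℝ) < #V := Nat.cast_pos.2 (Finset.card_pos.2 ⟨e.1, hG.fst_mem e he⟩)
  set p : ℝ := 6 * #V / #E
  have hp₀ : 0 < p := by positivity
  have hp₁ : p ≤ 1 := (div_le_one hE).2 (by exact_mod_cast h)
  have hpE : p * #E = 6 * #V := div_mul_cancel₀ _ hE.ne'
  have hpX : 3 * (#V : ℝ) ≤ p ^ 3 * #(crossings y E) := by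
    have hsample := hG.sq_mul_card_le hp₀.le hp₁
    refine le_of_mul_le_mul_left ?_ hp₀
    linear_combination hsample - p * hpE
  have hmul : 3 * (#V : ℝ) * #E ^ 3 ≤ 3 * #V * (72 * #V ^ 2 * #(crossings y E)) := by
    calc 3 * (#V : ℝ) * #E ^ 3 ≤ p ^ 3 * #(crossings y E) * #E ^ 3 := by gcongr
      _ = (p * #E) ^ 3 * #(crossings y E) := by ring
      _ = 3 * #V * (72 * #V ^ 2 * #(crossings y E)) := by rw [hpE]; ring
  exact_mod_cast le_of_mul_le_mul_left hmul (by positivity)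

end IsGeometricGraph

end CrossingLemma

section SzemerediTrotter

/-- The points of `V` on the graph of `l`. -/
def incident (V : Finset ℝ) (y : ℝ → ℝ) (l : ℝ →ᵃ[ℝ] ℝ) : Finset ℝ := {v ∈ V | l v = y v}

open scoped Classical in
/-- The segments joining consecutive points of `V` on the lines of `L`. -/
def arrangementEdges (V : Finset ℝ) (y : ℝ → ℝ) (L : Finset (ℝ →ᵃ[ℝ] ℝ)) : Finset (ℝ × ℝ) :=
  {e ∈ V ×ˢ V | chord y e ∈ L ∧ e.1 < e.2 ∧ ∀ v ∈ V, v ∈ Ioo e.1 e.2 → chord y e v ≠ y v}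

variable {V : Finset ℝ} {y : ℝ → ℝ} {E : Finset (ℝ × ℝ)} {L : Finset (ℝ →ᵃ[ℝ] ℝ)} {k : ℕ}

theorem mem_incident {l : ℝ →ᵃ[ℝ] ℝ} {v : ℝ} : v ∈ incident V y l ↔ v ∈ V ∧ l v = y v :=
  Finset.mem_filter

theorem mem_arrangementEdges {e : ℝ × ℝ} : e ∈ arrangementEdges V y L ↔ (e.1 ∈ V ∧ e.2 ∈ V) ∧
    chord y e ∈ L ∧ e.1 < e.2 ∧ ∀ v ∈ V, v ∈ Ioo e.1 e.2 → chord y e v ≠ y v := by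
  classical exact Finset.mem_filter.trans (and_congr_left' Finset.mem_product)

theorem isGeometricGraph_arrangementEdges (V : Finset ℝ) (y : ℝ → ℝ) (L : Finset (ℝ →ᵃ[ℝ] ℝ)) :
    IsGeometricGraph V y (arrangementEdges V y L) where
  fst_mem _ he := (mem_arrangementEdges.1 he).1.1
  snd_mem _ he := (mem_arrangementEdges.1 he).1.2
  fst_lt_snd _ he := (mem_arrangementEdges.1 he).2.2.1
  chord_ne _ he := (mem_arrangementEdges.1 he).2.2.2

open scoped Classical in
theorem card_incident_le_card_arrangementEdges_add_one {l : ℝ →ᵃ[ℝ] ℝ} (hl : l ∈ L) :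
    #(incident V y l) ≤ #{e ∈ arrangementEdges V y L | chord y e = l} + 1 := by
  refine (card_le_card_consecutive_add_one _).trans
    (Nat.succ_le_succ (Finset.card_le_card fun e he ↦ ?_))
  obtain ⟨hmem, hlt, hempty⟩ := Finset.mem_filter.1 he
  obtain ⟨h₁, h₂⟩ := Finset.mem_product.1 hmem
  rw [mem_incident] at h₁ h₂
  have hchord : chord y e = l := chord_eq_of_apply_eq hlt.ne h₁.2 h₂.2
  refine Finset.mem_filter.2 ⟨mem_arrangementEdges.2 ⟨⟨h₁.1, h₂.1⟩, hchord ▸ hl, hlt, ?_⟩, hchord⟩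
  exact fun v hv hev heq ↦ hempty v (mem_incident.2 ⟨hv, hchord ▸ heq⟩) hev

theorem mul_card_le_card_arrangementEdges (hL : ∀ l ∈ L, k < #(incident V y l)) :
    k * #L ≤ #(arrangementEdges V y L) := by
  classical
  refine Finset.mul_card_image_le_card_of_maps_to
    (fun e he ↦ (mem_arrangementEdges.1 he).2.1) k fun l hl ↦ ?_
  exact Nat.lt_succ_iff.1 ((hL l hl).trans_le (card_incident_le_card_arrangementEdges_add_one hl))

theorem IsGeometricGraph.card_crossings_le (hG : IsGeometricGraph V y E)
    (hL : ∀ e ∈ E, chord y e ∈ L) : #(crossings y E) ≤ #L ^ 2 := by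
  rw [sq, ← Finset.card_product]
  refine Finset.card_le_card_of_injOn (fun ef ↦ (chord y ef.1, chord y ef.2)) ?_ ?_
  · intro ef hef
    obtain ⟨⟨he, hf⟩, -⟩ := mem_crossings.1 hef
    exact Finset.mk_mem_product (hL _ he) (hL _ hf)
  · rintro ⟨e, f⟩ hef ⟨e', f'⟩ hef' heq
    obtain ⟨⟨he, hf⟩, hne, x, hx, hxeq⟩ := mem_crossings.1 hef
    obtain ⟨⟨he', hf'⟩, -, x', hx', hxeq'⟩ := mem_crossings.1 hef'
    obtain ⟨hee', hff'⟩ : chord y e = chord y e' ∧ chord y f = chord y f' := Prod.ext_iff.1 heq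
    obtain rfl : x = x' := by
      by_contra hxx'
      exact hne (affineMap_eq_of_apply_eq hxx' hxeq (by rwa [hee', hff']))
    exact Prod.ext (hG.eq_of_chord_eq he he' hee' ⟨hx.1, hx'.1⟩)
      (hG.eq_of_chord_eq hf hf' hff' ⟨hx.2, hx'.2⟩)

theorem szemeredi_trotter (hL : ∀ l ∈ L, k < #(incident V y l)) :
    #L * k ^ 3 ≤ 72 * #V ^ 2 + 6 * #V * k ^ 2 := by
  set E := arrangementEdges V y L
  have hG : IsGeometricGraph V y E := isGeometricGraph_arrangementEdges V y L
  have hkL : k * #L ≤ #E := mul_card_le_card_arrangementEdges hL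
  rcases L.card.eq_zero_or_pos with hL₀ | hLpos
  · simp [hL₀]
  rcases le_total (6 * #V) #E with hE | hE
  · have hX : #(crossings y E) ≤ #L ^ 2 :=
      hG.card_crossings_le fun e he ↦ (mem_arrangementEdges.1 he).2.1
    have hmul : #L ^ 2 * (#L * k ^ 3) ≤ #L ^ 2 * (72 * #V ^ 2) := by
      calc #L ^ 2 * (#L * k ^ 3) = (k * #L) ^ 3 := by ring
        _ ≤ #E ^ 3 := by gcongr
        _ ≤ 72 * #V ^ 2 * #(crossings y E) := hG.card_pow_three_le hE
        _ ≤ 72 * #V ^ 2 * #L ^ 2 := by gcongr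
        _ = #L ^ 2 * (72 * #V ^ 2) := mul_comm _ _
    exact (Nat.le_of_mul_le_mul_left hmul (by positivity)).trans (Nat.le_add_right _ _)
  · calc #L * k ^ 3 = k * #L * k ^ 2 := by ring
      _ ≤ 6 * #V * k ^ 2 := Nat.mul_le_mul_right _ (hkL.trans hE)
      _ ≤ 72 * #V ^ 2 + 6 * #V * k ^ 2 := Nat.le_add_left _ _

end SzemerediTrotter

section RichPairs

/-- The abscissa of `p` after the shear `(a, b) ↦ (a + t * b, b)`. For suitable `t` it separates the
points of a finite set, so that no line spanned by them is vertical in the sheared coordinates. -/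
def shear (t : ℝ) (p : ℝ × ℝ) : ℝ := p.1 + t * p.2

variable {S : Finset (ℝ × ℝ)} {y : ℝ → ℝ} {t : ℝ} {p q r : ℝ × ℝ}

theorem exists_injOn_shear (S : Finset (ℝ × ℝ)) : ∃ t : ℝ, InjOn (shear t) S := by
  obtain ⟨t, ht⟩ := Infinite.exists_notMem_finset
    ((S ×ˢ S).image fun pq ↦ (pq.2.1 - pq.1.1) / (pq.1.2 - pq.2.2))
  refine ⟨t, fun p hp q hq hpq ↦ ?_⟩
  simp only [shear] at hpq
  have hsnd : p.2 = q.2 := by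
    by_contra hne
    refine ht (Finset.mem_image.2 ⟨(p, q), Finset.mk_mem_product hp hq, ?_⟩)
    rw [div_eq_iff (sub_ne_zero.2 hne)]
    linear_combination -hpq
  exact Prod.ext (by simpa [hsnd] using hpq) hsnd

theorem mem_lineThrough_iff (hpq : shear t p ≠ shear t q) : r ∈ lineThrough p q ↔
    r.2 - p.2 = (q.2 - p.2) / (shear t q - shear t p) * (shear t r - shear t p) := by
  have hne : shear t q - shear t p ≠ 0 := sub_ne_zero.2 hpq.symm
  rw [lineThrough, SetLike.mem_coe, mem_affineSpan_pair_iff_exists_lineMap_eq]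
  simp only [AffineMap.lineMap_apply_module', Prod.ext_iff, Prod.fst_add, Prod.snd_add,
    Prod.smul_fst, Prod.smul_snd, Prod.fst_sub, Prod.snd_sub, smul_eq_mul]
  constructor
  · rintro ⟨s, hfst, hsnd⟩
    have hshear : shear t r - shear t p = s * (shear t q - shear t p) := by
      simp only [shear]
      linear_combination -hfst - t * hsnd
    rw [hshear, ← hsnd]
    field_simp
    ring
  · intro hr
    set s := (shear t r - shear t p) / (shear t q - shear t p) with hs
    have hshear : s * (shear t q - shear t p) = shear t r - shear t p := div_mul_cancel₀ _ hne
    have hsnd : s * (q.2 - p.2) + p.2 = r.2 := by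
      rw [hs]
      linear_combination -hr
    refine ⟨s, ?_, hsnd⟩
    simp only [shear] at hshear
    linear_combination hshear - t * hsnd

theorem mem_lineThrough_iff_chord (hy : ∀ p ∈ S, y (shear t p) = p.2) (hp : p ∈ S) (hq : q ∈ S)
    (hr : r ∈ S) (hpq : shear t p ≠ shear t q) : r ∈ lineThrough p q ↔
      chord y (shear t p, shear t q) (shear t r) = y (shear t r) := by
  rw [mem_lineThrough_iff hpq, chord_apply, slope_def_field, hy p hp, hy q hq, hy r hr,
    ← eq_sub_iff_add_eq, eq_comm]

theorem richness_eq_card_incident (ht : InjOn (shear t) S) (hy : ∀ p ∈ S, y (shear t p) = p.2)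
    (hp : p ∈ S) (hq : q ∈ S) (hpq : p ≠ q) : richness S (lineThrough p q) =
      #(incident (S.image (shear t)) y (chord y (shear t p, shear t q))) := by
  have hline : (S : Set (ℝ × ℝ)) ∩ lineThrough p q =
      ({r ∈ S | chord y (shear t p, shear t q) (shear t r) = y (shear t r)} : Finset (ℝ × ℝ)) := by
    ext r
    rw [Finset.coe_filter]
    exact and_congr_right fun hr ↦ mem_lineThrough_iff_chord hy hp hq hr (ht.ne hp hq hpq)
  rw [richness, hline, ncard_coe_finset, incident, Finset.filter_image,
    Finset.card_image_of_injOn (ht.mono (Finset.filter_subset _ _))]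

theorem richness_lineThrough_self_le_one (S : Finset (ℝ × ℝ)) (p : ℝ × ℝ) :
    richness S (lineThrough p p) ≤ 1 := by
  have hline : lineThrough p p = {p} := by simp [lineThrough]
  rw [richness, hline, ← ncard_singleton p]
  exact ncard_le_ncard inter_subset_right

/-- The ordered pairs of points of `S` whose line contains more than `k` and at most `m` points of
`S`. -/
def richPairs (S : Finset (ℝ × ℝ)) (k m : ℕ) : Finset ((ℝ × ℝ) × (ℝ × ℝ)) :=
  {pq ∈ S ×ˢ S | k < richness S (lineThrough pq.1 pq.2) ∧ richness S (lineThrough pq.1 pq.2) ≤ m}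

variable {k m : ℕ}

theorem mem_richPairs {pq : (ℝ × ℝ) × (ℝ × ℝ)} : pq ∈ richPairs S k m ↔ (pq.1 ∈ S ∧ pq.2 ∈ S) ∧
    k < richness S (lineThrough pq.1 pq.2) ∧ richness S (lineThrough pq.1 pq.2) ≤ m := by
  rw [richPairs, Finset.mem_filter, Finset.mem_product]

theorem ne_of_mem_richPairs (hk : 0 < k) {pq : (ℝ × ℝ) × (ℝ × ℝ)} (h : pq ∈ richPairs S k m) :
    pq.1 ≠ pq.2 := by
  intro heq
  have hrich := (mem_richPairs.1 h).2.1
  rw [heq] at hrich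
  exact (hrich.trans_le (richness_lineThrough_self_le_one S pq.2)).not_ge hk

open scoped Classical in
theorem card_richPairs_le_sq_mul_card_image (hk : 0 < k) (ht : InjOn (shear t) S)
    (hy : ∀ p ∈ S, y (shear t p) = p.2) : #(richPairs S k m) ≤
      m ^ 2 * #((richPairs S k m).image fun pq ↦ chord y (shear t pq.1, shear t pq.2)) := by
  refine Finset.card_le_mul_card_image _ _ fun l hl ↦ ?_
  obtain ⟨b, hb, rfl⟩ := Finset.mem_image.1 hl
  obtain ⟨⟨hb₁, hb₂⟩, -, hbm⟩ := mem_richPairs.1 hb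
  set I := incident (S.image (shear t)) y (chord y (shear t b.1, shear t b.2))
  have hI : #I ≤ m :=
    (richness_eq_card_incident ht hy hb₁ hb₂ (ne_of_mem_richPairs hk hb)).symm.trans_le hbm
  calc _ ≤ #(I ×ˢ I) := by
        refine Finset.card_le_card_of_injOn (Prod.map (shear t) (shear t)) ?_ ?_
        · intro a ha
          obtain ⟨haA, hchord⟩ := Finset.mem_filter.1 ha
          obtain ⟨⟨ha₁, ha₂⟩, -⟩ := mem_richPairs.1 haA
          refine Finset.mk_mem_product (mem_incident.2 ⟨Finset.mem_image_of_mem _ ha₁, ?_⟩)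
            (mem_incident.2 ⟨Finset.mem_image_of_mem _ ha₂, ?_⟩)
          · rw [← hchord, chord_fst y (shear t a.1, shear t a.2)]
          · rw [← hchord, chord_snd y (shear t a.1, shear t a.2)]
        · refine (ht.prodMap ht).mono fun a ha ↦ ?_
          exact (mem_richPairs.1 (Finset.mem_filter.1 ha).1).1
    _ = #I ^ 2 := by rw [Finset.card_product, sq]
    _ ≤ m ^ 2 := by gcongr

theorem card_richPairs_mul_pow_three_le (S : Finset (ℝ × ℝ)) (hk : 0 < k) :
    #(richPairs S k m) * k ^ 3 ≤ m ^ 2 * (72 * #S ^ 2 + 6 * #S * k ^ 2) := by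
  classical
  obtain ⟨t, ht⟩ := exists_injOn_shear S
  obtain ⟨y, hy⟩ : ∃ y : ℝ → ℝ, ∀ p ∈ S, y (shear t p) = p.2 :=
    ⟨fun x ↦ (Function.invFunOn (shear t) S x).2,
      fun p hp ↦ congrArg Prod.snd (ht.leftInvOn_invFunOn hp)⟩
  set L := (richPairs S k m).image fun pq ↦ chord y (shear t pq.1, shear t pq.2)
  have hrich : ∀ l ∈ L, k < #(incident (S.image (shear t)) y l) := fun l hl ↦ by
    obtain ⟨pq, hpq, rfl⟩ := Finset.mem_image.1 hl
    obtain ⟨⟨hp, hq⟩, hlt, -⟩ := mem_richPairs.1 hpq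
    rwa [← richness_eq_card_incident ht hy hp hq (ne_of_mem_richPairs hk hpq)]
  have hlines := szemeredi_trotter hrich
  rw [Finset.card_image_of_injOn ht] at hlines
  calc #(richPairs S k m) * k ^ 3
      ≤ m ^ 2 * #L * k ^ 3 := by
        gcongr
        exact card_richPairs_le_sq_mul_card_image hk ht hy
    _ = m ^ 2 * (#L * k ^ 3) := mul_assoc _ _ _
    _ ≤ m ^ 2 * (72 * #S ^ 2 + 6 * #S * k ^ 2) := by gcongr

theorem card_richPairs_half_mul_le (S : Finset (ℝ × ℝ)) (hm : 3 ≤ m) :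
    #(richPairs S ((m - 1) / 2) m) * m ≤ 4608 * #S ^ 2 + 96 * #S * m ^ 2 := by
  set k := (m - 1) / 2
  have hk : 0 < k := by lia
  have hmk : m ≤ 4 * k := by lia
  have hkm : 2 * k ≤ m := by lia
  have hmul : k ^ 2 * (#(richPairs S k m) * m) ≤
      k ^ 2 * (4608 * #S ^ 2 + 96 * #S * (2 * k) ^ 2) := by
    calc k ^ 2 * (#(richPairs S k m) * m) ≤ k ^ 2 * (#(richPairs S k m) * (4 * k)) := by gcongr
      _ = 4 * (#(richPairs S k m) * k ^ 3) := by ring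
      _ ≤ 4 * (m ^ 2 * (72 * #S ^ 2 + 6 * #S * k ^ 2)) := by
          gcongr 4 * ?_
          exact card_richPairs_mul_pow_three_le S hk
      _ ≤ 4 * ((4 * k) ^ 2 * (72 * #S ^ 2 + 6 * #S * k ^ 2)) := by gcongr
      _ = k ^ 2 * (4608 * #S ^ 2 + 96 * #S * (2 * k) ^ 2) := by ring
  calc #(richPairs S k m) * m ≤ 4608 * #S ^ 2 + 96 * #S * (2 * k) ^ 2 :=
        Nat.le_of_mul_le_mul_left hmul (by positivity)
    _ ≤ 4608 * #S ^ 2 + 96 * #S * m ^ 2 := by gcongr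

end RichPairs

theorem card_filter_richness_mul_le {P Q : Finset (ℝ × ℝ)} {n m : ℕ} (hP : #P ≤ n) (hQ : #Q ≤ n) :
    #{pq ∈ P ×ˢ Q | m ≤ 2 * richness (P ∪ Q) (lineThrough pq.1 pq.2) ∧
      richness (P ∪ Q) (lineThrough pq.1 pq.2) ≤ m} * m ≤ 18432 * (n ^ 2 + n * m ^ 2) := by
  rcases le_or_gt m 2 with hm | hm
  · calc _ ≤ #P * #Q * m := by
          gcongr
          exact (Finset.card_filter_le _ _).trans_eq (Finset.card_product P Q)
      _ ≤ n * n * 2 := by gcongr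
      _ ≤ 18432 * (n ^ 2 + n * m ^ 2) := by nlinarith
  · have hS : #(P ∪ Q) ≤ 2 * n := by
      linarith [Finset.card_union_le P Q]
    calc _ ≤ #(richPairs (P ∪ Q) ((m - 1) / 2) m) * m := by
          refine Nat.mul_le_mul_right _ (Finset.card_le_card fun pq hpq ↦ ?_)
          obtain ⟨hmem, hlo, hhi⟩ := Finset.mem_filter.1 hpq
          obtain ⟨hp, hq⟩ := Finset.mem_product.1 hmem
          exact mem_richPairs.2
            ⟨⟨Finset.mem_union_left _ hp, Finset.mem_union_right _ hq⟩, by lia, hhi⟩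
      _ ≤ 4608 * #(P ∪ Q) ^ 2 + 96 * #(P ∪ Q) * m ^ 2 := card_richPairs_half_mul_le _ hm
      _ ≤ 4608 * (2 * n) ^ 2 + 96 * (2 * n) * m ^ 2 := by gcongr
      _ ≤ 18432 * (n ^ 2 + n * m ^ 2) := by nlinarith [Nat.zero_le (n * m ^ 2)]

theorem dyadic_pairs_general :
    ∃ C : ℝ, 0 < C ∧ ∀ (P Q : Finset (ℝ × ℝ)) (n m : ℕ), #P ≤ n → #Q ≤ n → 0 < m →
      (#{pq ∈ P ×ˢ Q | m ≤ 2 * richness (P ∪ Q) (lineThrough pq.1 pq.2) ∧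
        richness (P ∪ Q) (lineThrough pq.1 pq.2) ≤ m} : ℝ) ≤
        C * ((n : ℝ) ^ 2 / m + (n : ℝ) * m) := by
  refine ⟨18432, by norm_num, fun P Q n m hP hQ hm ↦ ?_⟩
  have hm' : (0 : ℝ) < m := Nat.cast_pos.2 hm
  have hbound : 18432 * ((n : ℝ) ^ 2 / m + n * m) = 18432 * (n ^ 2 + n * m ^ 2) / m := by
    field_simp
  rw [hbound, le_div_iff₀ hm']
  exact_mod_cast card_filter_richness_mul_le hP hQ

/-- The number of bichromatic pairs whose line has richness between `2^(j-1)` and `2^j`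
is at most `C · (n²/2^j + n · 2^j)`. -/
theorem dyadic_pairs :
    ∃ C : ℝ, 0 < C ∧ ∀ (P Q : Finset (ℝ × ℝ)) (n j : ℕ),
      Disjoint P Q → P.card = n → Q.card = n → 1 ≤ j →
      ((((P ×ˢ Q).filter fun pq =>
          2 ^ (j - 1) ≤ richness (P ∪ Q) (lineThrough pq.1 pq.2) ∧
          richness (P ∪ Q) (lineThrough pq.1 pq.2) ≤ 2 ^ j).card : ℝ)) ≤
        C * ((n : ℝ) ^ 2 / 2 ^ j + (n : ℝ) * 2 ^ j) := by
  obtain ⟨C, hC, hbound⟩ := dyadic_pairs_general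
  refine ⟨C, hC, fun P Q n j _ hP hQ hj ↦ ?_⟩
  obtain ⟨i, rfl⟩ := Nat.exists_eq_add_of_le' hj
  simpa [pow_succ'] using hbound P Q n (2 ^ (i + 1)) hP.le hQ.le (by positivity)
end
end

section
/- Let ℓ₁ and ℓ₂ be two distinct lines in the Euclidean plane ℝ², let A be a set of m points on ℓ₁, and let B be a set of m points on ℓ₂, with A and B disjoint. Then the set of lines determined by one point of A and one point of B contains at least (m − 1)² distinct lines. -/
open Set

noncomputable section

/-!
Distinct lines share at most one point, so all but at most one point of `A` avoid `ℓ₂`, and all but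
at most one point of `B` avoid `ℓ₁`. For such `a` and `b`, the line through them meets `ℓ₁` exactly
in `a` and `ℓ₂` exactly in `b`, so it determines the pair `(a, b)`.
-/

section AffineSpace

variable {k V P : Type*} [DivisionRing k] [AddCommGroup V] [Module k V] [AddTorsor V P]
  {p q p₁ q₁ p₂ q₂ a b : P} {A B : Set P}

theorem subsingleton_line_inter_line (hne : line[k, p₁, q₁] ≠ line[k, p₂, q₂]) :
    ((line[k, p₁, q₁] : Set P) ∩ line[k, p₂, q₂]).Subsingleton := by
  rintro x ⟨hx₁, hx₂⟩ y ⟨hy₁, hy₂⟩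
  by_contra hxy
  exact hne <| (affineSpan_pair_eq_of_mem_of_mem_of_ne hx₁ hy₁ hxy).symm.trans
    (affineSpan_pair_eq_of_mem_of_mem_of_ne hx₂ hy₂ hxy)

theorem line_inter_line_eq_singleton_left (ha : a ∈ line[k, p, q]) (hb : b ∉ line[k, p, q]) :
    (line[k, a, b] : Set P) ∩ line[k, p, q] = {a} := by
  have hne : line[k, a, b] ≠ line[k, p, q] := fun h ↦ hb (h ▸ right_mem_affineSpan_pair k a b)
  exact (subsingleton_line_inter_line hne).eq_singleton_of_mem
    ⟨left_mem_affineSpan_pair k a b, ha⟩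

theorem line_inter_line_eq_singleton_right (ha : a ∉ line[k, p, q]) (hb : b ∈ line[k, p, q]) :
    (line[k, a, b] : Set P) ∩ line[k, p, q] = {b} := by
  rw [pair_comm, line_inter_line_eq_singleton_left hb ha]

theorem injOn_line_sdiff_prod_sdiff :
    InjOn (fun x : P × P ↦ (line[k, x.1, x.2] : Set P))
      (((line[k, p₁, q₁] : Set P) \ line[k, p₂, q₂]) ×ˢ
        ((line[k, p₂, q₂] : Set P) \ line[k, p₁, q₁])) := by
  rintro ⟨a, b⟩ ⟨⟨ha₁, ha₂⟩, hb₂, hb₁⟩ ⟨a', b'⟩ ⟨⟨ha₁', ha₂'⟩, hb₂', hb₁'⟩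
    (heq : (line[k, a, b] : Set P) = line[k, a', b'])
  have left_eq : ({a} : Set P) = {a'} := by
    rw [← line_inter_line_eq_singleton_left ha₁ hb₁, heq,
      line_inter_line_eq_singleton_left ha₁' hb₁']
  have right_eq : ({b} : Set P) = {b'} := by
    rw [← line_inter_line_eq_singleton_right ha₂ hb₂, heq,
      line_inter_line_eq_singleton_right ha₂' hb₂']
  exact Prod.ext (singleton_injective left_eq) (singleton_injective right_eq)

theorem encard_sub_one_le_encard_sdiff_line (hne : line[k, p₁, q₁] ≠ line[k, p₂, q₂])
    (hA : A ⊆ line[k, p₁, q₁]) :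
    A.encard - 1 ≤ (A \ line[k, p₂, q₂]).encard := by
  have inter_le_one : (A ∩ line[k, p₂, q₂]).encard ≤ 1 :=
    encard_le_one_iff_subsingleton.2 <|
      (subsingleton_line_inter_line hne).anti (inter_subset_inter_left _ hA)
  rw [tsub_le_iff_right, ← encard_sdiff_add_encard_inter A line[k, p₂, q₂]]
  gcongr

theorem grid_lines_general (hne : line[k, p₁, q₁] ≠ line[k, p₂, q₂])
    (hA : A ⊆ line[k, p₁, q₁]) (hB : B ⊆ line[k, p₂, q₂]) :
    (A.encard - 1) * (B.encard - 1) ≤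
      {L : Set P | ∃ a ∈ A, ∃ b ∈ B, a ≠ b ∧ L = line[k, a, b]}.encard := by
  set A' := A \ line[k, p₂, q₂]
  set B' := B \ line[k, p₁, q₁]
  have line_injOn : InjOn (fun x : P × P ↦ (line[k, x.1, x.2] : Set P)) (A' ×ˢ B') :=
    injOn_line_sdiff_prod_sdiff.mono
      (prod_mono (sdiff_subset_sdiff_left hA) (sdiff_subset_sdiff_left hB))
  calc (A.encard - 1) * (B.encard - 1)
      ≤ A'.encard * B'.encard :=
        mul_le_mul' (encard_sub_one_le_encard_sdiff_line hne hA)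
          (encard_sub_one_le_encard_sdiff_line hne.symm hB)
    _ = ((fun x : P × P ↦ (line[k, x.1, x.2] : Set P)) '' A' ×ˢ B').encard := by
        rw [line_injOn.encard_image, encard_prod]
    _ ≤ _ := by
        refine encard_le_encard ?_
        rintro _ ⟨⟨a, b⟩, ⟨⟨ha, ha₂⟩, hb, -⟩, rfl⟩
        exact ⟨a, ha, b, hb, (ne_of_mem_of_not_mem (hB hb) ha₂).symm, rfl⟩

end AffineSpace

theorem finite_setOf_eq_lineThrough (A B : Finset (ℝ × ℝ)) :
    {L : Set (ℝ × ℝ) | ∃ a ∈ A, ∃ b ∈ B, L = lineThrough a b}.Finite :=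
  (A.finite_toSet.image2 lineThrough B.finite_toSet).subset
    fun _ ⟨a, ha, b, hb, hL⟩ ↦ ⟨a, ha, b, hb, hL.symm⟩

/-- Two disjoint sets of `m` points on two distinct lines determine at least
`(m − 1)²` distinct connecting lines. -/
theorem grid_lines (ℓ₁ ℓ₂ : Set (ℝ × ℝ)) (A B : Finset (ℝ × ℝ)) (m : ℕ)
    (h1 : IsLine ℓ₁) (h2 : IsLine ℓ₂) (hne : ℓ₁ ≠ ℓ₂)
    (hA : (A : Set (ℝ × ℝ)) ⊆ ℓ₁) (hB : (B : Set (ℝ × ℝ)) ⊆ ℓ₂)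
    (hAB : Disjoint A B) (hcA : A.card = m) (hcB : B.card = m) :
    (m - 1) ^ 2 ≤ {L : Set (ℝ × ℝ) | ∃ a ∈ A, ∃ b ∈ B, L = lineThrough a b}.ncard := by
  obtain ⟨p₁, q₁, -, rfl⟩ := h1
  obtain ⟨p₂, q₂, -, rfl⟩ := h2
  have card_le := (grid_lines_general (ne_of_apply_ne SetLike.coe hne) hA hB).trans <|
    encard_le_encard fun L ⟨a, ha, b, hb, _, hL⟩ ↦
      (⟨a, ha, b, hb, hL⟩ : ∃ a ∈ A, ∃ b ∈ B, L = lineThrough a b)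
  rw [encard_coe_eq_coe_finsetCard, encard_coe_eq_coe_finsetCard, hcA, hcB, ← sq] at card_le
  rw [← Nat.cast_le (α := ℕ∞), (finite_setOf_eq_lineThrough A B).cast_ncard_eq]
  exact_mod_cast card_le
end
end
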